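/- Let S be a finite alphabet with complementation and let d ≤ 3. Every polybox code V ⊆ S^d which does not contain a twin pair is rigid and satisfies |V| ≤ 5. -/

import Mathlib

/-- `ES` is the set of all `B ⊆ S` containing exactly one letter from each
complementary pair `{s, s'}`. -/
def ESet {S : Type*} (c : S → S) : Set (Set S) :=
  {B | ∀ s, s ∈ B ↔ c s ∉ B}

/-- `Es = {B ∈ ES : s ∈ B}`. -/
def Eltr {S : Type*} (c : S → S) (s : S) : Set (Set S) :=
  {B | B ∈ ESet c ∧ s ∈ B}

/-- The equicomplementary realization `v̌ = Ev₁ × ⋯ × Ev_d` of a word `v ∈ S^d`,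
viewed as a box in the `d`-box `(ES)^d`. -/
def realize {S : Type*} (c : S → S) {d : ℕ} (v : Fin d → S) :
    Set (Fin d → Set S) :=
  {B | ∀ i, B i ∈ Eltr c (v i)}

/-- Words `u, v ∈ S^d` are dichotomous: some coordinate carries complementary
letters. -/
def Dichotomous {S : Type*} (c : S → S) {d : ℕ} (u v : Fin d → S) : Prop :=
  ∃ j, v j = c (u j)

/-- Words `u, v ∈ S^d` form a twin pair. -/
def TwinPair {S : Type*} (c : S → S) {d : ℕ} (u v : Fin d → S) : Prop :=
  ∃ j, v j = c (u j) ∧ ∀ i, i ≠ j → u i = v i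

/-- A polybox code: a set of pairwise dichotomous words. -/
def PolyboxCode {S : Type*} (c : S → S) {d : ℕ} (V : Set (Fin d → S)) : Prop :=
  ∀ u ∈ V, ∀ v ∈ V, u ≠ v → Dichotomous c u v

/-- Polybox codes `V, W ⊆ S^d` are equivalent if
`⋃_{v ∈ V} v̌ = ⋃_{w ∈ W} w̌`. -/
def Equivalent {S : Type*} (c : S → S) {d : ℕ}
    (V W : Set (Fin d → S)) : Prop :=
  (⋃ v ∈ V, realize c v) = ⋃ w ∈ W, realize c w

/-- A polybox code `V ⊆ S^d` is rigid if every polybox code equivalent to `V`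
equals `V`. -/
def Rigid {S : Type*} (c : S → S) {d : ℕ} (V : Set (Fin d → S)) : Prop :=
  ∀ W : Set (Fin d → S), PolyboxCode c W → Equivalent c V W → W = V

/-!
Prepending a fixed letter to all words preserves every notion involved, so the dimension may be
taken to be three. There, twin-freeness means that words sharing two letters coincide, and hence
each letter occurs at most twice at each coordinate.

*Size.* If no two words share a letter, a word `v` is dichotomous to each other word at its own
coordinate, so there are at most four words. Otherwise let `u`, `v` share the letter at `i` and be
complementary at `j`. Every word `x` has `x i = (u i)'`, `x j = u j` or `x j = v j`, and six words
would provide a word satisfying only the first condition, a word other than `v` satisfying only the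
last and a word other than `u` satisfying only the second. Dichotomy with the other two makes the
third letter of the first equal to both `v k` and `u k`, which differ.

*Rigidity.* Let the box of `w ∉ V` be covered by `V`. Replacing a letter of a word by its
complement leads to a part of the box of `w` that another word must cover, and repeating this
produces words `(w i, b, e)`, `(a, w j, e')`, `(a', b', w k)` of `V`. The two corners they leave
uncovered force the words `(a, b', e)` and `(a', b, e')`, and together these five words exclude any
word of `V` dichotomous to `w`. If `W` is equivalent to `V` and `w ∈ W`, a further `w' ∈ W` would be
complementary to `w` at some coordinate `l`, so `w' ∉ V`; but the letter `w l` occurs in `V`, in a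
word dichotomous to `w'`. So `W = {w}`, although no box contained in that of `w` belongs to a word
other than `w`.
-/

/-- `c` is the complementation of an alphabet. -/
structure IsComplementation {S : Type*} (c : S → S) : Prop where
  compl_compl (s : S) : c (c s) = s
  compl_ne (s : S) : c s ≠ s

/-- A polybox code without twin pairs. -/
structure IsTwinFreeCode {S : Type*} (c : S → S) {d : ℕ} (V : Set (Fin d → S)) : Prop where
  polyboxCode : PolyboxCode c V
  not_twinPair : ∀ u ∈ V, ∀ v ∈ V, ¬ TwinPair c u v

/-- The letters of `L` are pairwise non-complementary, so that they may lie in a common member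
of `ESet c`. -/
def IsComplFree {S : Type*} (c : S → S) (L : Set S) : Prop :=
  ∀ s ∈ L, c s ∉ L

/-- The box of `w` is contained in the polybox of `V`; this is the relation `w ⊑ V` of the theory
of polybox codes. -/
def IsCoveredBy {S : Type*} (c : S → S) {d : ℕ} (w : Fin d → S) (V : Set (Fin d → S)) : Prop :=
  realize c w ⊆ ⋃ v ∈ V, realize c v

/-- `i`, `j`, `k` enumerate the three coordinates. Results about coordinates in general position
are stated for such a triple and applied to its permutations. -/
structure IsFrame (i j k : Fin 3) : Prop where
  ne₁₂ : i ≠ j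
  ne₁₃ : i ≠ k
  ne₂₃ : j ≠ k

namespace IsFrame

variable {i j k : Fin 3}

theorem swap (h : IsFrame i j k) : IsFrame j i k :=
  ⟨h.ne₁₂.symm, h.ne₂₃, h.ne₁₃⟩

theorem rotate (h : IsFrame i j k) : IsFrame j k i :=
  ⟨h.ne₂₃, h.ne₁₂.symm, h.ne₁₃.symm⟩

theorem eq_or_eq_or_eq (h : IsFrame i j k) (l : Fin 3) : l = i ∨ l = j ∨ l = k := by
  obtain ⟨hij, hik, hjk⟩ := h
  lia

theorem forall_iff (h : IsFrame i j k) {P : Fin 3 → Prop} : (∀ l, P l) ↔ P i ∧ P j ∧ P k := by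
  refine ⟨fun hP => ⟨hP i, hP j, hP k⟩, fun ⟨hi, hj, hk⟩ l => ?_⟩
  rcases h.eq_or_eq_or_eq l with rfl | rfl | rfl <;> assumption

theorem exists_iff (h : IsFrame i j k) {P : Fin 3 → Prop} : (∃ l, P l) ↔ P i ∨ P j ∨ P k := by
  rw [← not_iff_not, not_exists, h.forall_iff]
  tauto

end IsFrame

theorem exists_isFrame {i j : Fin 3} (hij : i ≠ j) : ∃ k, IsFrame i j k := by
  obtain ⟨k, hik, hjk⟩ : ∃ k, i ≠ k ∧ j ≠ k := by decide +revert
  exact ⟨k, hij, hik, hjk⟩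

section AnyDimension

variable {S : Type*} {c : S → S} {d : ℕ} {V W : Set (Fin d → S)} {u v w : Fin d → S}

theorem not_dichotomous_iff : ¬ Dichotomous c u v ↔ ∀ l, v l ≠ c (u l) :=
  not_exists

theorem IsComplementation.eq_compl_comm (hc : IsComplementation c) {s t : S} :
    s = c t ↔ t = c s := by
  constructor <;> (rintro rfl; exact (hc.compl_compl _).symm)

theorem IsComplementation.injective (hc : IsComplementation c) : Function.Injective c :=
  Function.Involutive.injective hc.compl_compl

theorem PolyboxCode.eq_of_not_dichotomous (hV : PolyboxCode c V) (hu : u ∈ V) (hv : v ∈ V)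
    (h : ¬ Dichotomous c u v) : u = v :=
  by_contra fun huv => h (hV u hu v hv huv)

theorem IsTwinFreeCode.eq_of_forall_ne (hV : IsTwinFreeCode c V) (hc : IsComplementation c)
    (hu : u ∈ V) (hv : v ∈ V) {i : Fin d} (huv : ∀ l, l ≠ i → u l = v l) : u = v := by
  refine hV.polyboxCode.eq_of_not_dichotomous hu hv fun ⟨j, hj⟩ => ?_
  obtain rfl : j = i := by
    by_contra hji
    exact hc.compl_ne (u j) (by rw [← hj, huv j hji])
  exact hV.not_twinPair u hu v hv ⟨j, hj, huv⟩

theorem IsTwinFreeCode.exists_ne_apply_ne (hV : IsTwinFreeCode c V) (hc : IsComplementation c)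
    (hu : u ∈ V) (hv : v ∈ V) (huv : u ≠ v) (i : Fin d) : ∃ l ≠ i, u l ≠ v l := by
  by_contra! h
  exact huv (hV.eq_of_forall_ne hc hu hv h)

theorem isComplFree_singleton (hc : IsComplementation c) (s : S) : IsComplFree c {s} := by
  rintro _ rfl
  exact hc.compl_ne _

theorem isComplFree_pair (hc : IsComplementation c) {s t : S} (hst : t ≠ c s) :
    IsComplFree c {s, t} := by
  obtain ⟨compl_compl, compl_ne⟩ := hc
  grind [IsComplFree]

theorem IsComplFree.insert (hc : IsComplementation c) {L : Set S} (hL : IsComplFree c L) {s : S}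
    (hs : c s ∉ L) : IsComplFree c (insert s L) := by
  obtain ⟨compl_compl, compl_ne⟩ := hc
  grind [IsComplFree]

theorem IsComplFree.exists_mem_ESet_superset (hc : IsComplementation c) {L : Set S}
    (hL : IsComplFree c L) : ∃ B ∈ ESet c, L ⊆ B := by
  classical
  -- A linear order selects one letter from each complementary pair that does not meet `L`.
  let _ : LinearOrder S := linearOrderOfSTO (WellOrderingRel (α := S))
  refine ⟨{s | s ∈ L ∨ c s ∉ L ∧ s < c s}, fun s => ?_, fun s hs => Or.inl hs⟩
  have hs := hL s
  have hcs := hL (c s)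
  have hlt : s < c s ∨ c s < s := (hc.compl_ne s).symm.lt_or_gt
  have hasymm : s < c s → ¬ c s < s := lt_asymm
  simp only [Set.mem_ofPred_eq, hc.compl_compl] at *
  tauto

/-- A point of the box of `w` with all letters of `L i` in its `i`-th coordinate lies in the box of
some word of `V`. -/
theorem IsCoveredBy.exists_mem_forall_compl_notMem (hc : IsComplementation c)
    (hw : IsCoveredBy c w V) {L : Fin d → Set S} (hL : ∀ i, IsComplFree c (L i))
    (hwL : ∀ i, w i ∈ L i) : ∃ v ∈ V, ∀ i, c (v i) ∉ L i := by
  choose B hB hLB using fun i => (hL i).exists_mem_ESet_superset hc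
  obtain ⟨v, hv, hBv⟩ := Set.mem_iUnion₂.1 (hw fun i => ⟨hB i, hLB i (hwL i)⟩)
  exact ⟨v, hv, fun i hvi => (hB i (v i)).1 (hBv i).2 (hLB i hvi)⟩

theorem IsCoveredBy.exists_mem_not_dichotomous (hc : IsComplementation c)
    (hw : IsCoveredBy c w V) : ∃ v ∈ V, ¬ Dichotomous c w v := by
  obtain ⟨v, hv, hvw⟩ := hw.exists_mem_forall_compl_notMem hc
    (fun i => isComplFree_singleton hc (w i)) fun i => rfl
  exact ⟨v, hv, fun ⟨l, hl⟩ => hvw l (hc.eq_compl_comm.1 hl).symm⟩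

theorem IsCoveredBy.eq_of_singleton (hc : IsComplementation c) (hv : IsCoveredBy c v {w}) :
    v = w := by
  by_contra hvw
  obtain ⟨i, hi⟩ := Function.ne_iff.1 hvw
  obtain ⟨_, rfl, hw⟩ := hv.exists_mem_forall_compl_notMem hc
    (L := Function.update (fun l => {v l}) i {v i, c (w i)})
    (fun l => by
      obtain rfl | hl := eq_or_ne l i
      · simpa using isComplFree_pair hc fun h => hi (hc.injective h).symm
      · simpa [hl] using isComplFree_singleton hc (v l))
    (fun l => by by_cases hl : l = i <;> aesop)
  simpa using hw i

/-- Replacing the letter `v i` by its complement leads to a part of the box of `w` that only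
words `u` with `u i = c (v i)` can cover. -/
theorem IsCoveredBy.exists_mem_apply_eq_compl (hc : IsComplementation c) (hV : PolyboxCode c V)
    (hw : IsCoveredBy c w V) (hv : v ∈ V) (hwv : ¬ Dichotomous c w v) {i : Fin d}
    (hi : v i ≠ w i) {a : Fin d → S} (ha : ∀ l, l ≠ i → a l ≠ v l ∧ a l ≠ w l) :
    ∃ u ∈ V, ¬ Dichotomous c w u ∧ u i = c (v i) ∧ ∀ l, l ≠ i → u l ≠ a l := by
  rw [not_dichotomous_iff] at hwv
  let L : Fin d → Set S := Function.update (fun l => {c (a l), w l, v l}) i {w i, c (v i)}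
  have hLi : L i = {w i, c (v i)} := Function.update_self ..
  have hLl (l) (hl : l ≠ i) : L l = {c (a l), w l, v l} := Function.update_of_ne hl ..
  obtain ⟨u, hu, huL⟩ := hw.exists_mem_forall_compl_notMem hc (L := L)
    (fun l => by
      obtain rfl | hl := eq_or_ne l i
      · exact hLi ▸ isComplFree_pair hc fun h => hi (hc.injective h)
      · rw [hLl l hl]
        exact (isComplFree_pair hc (hwv l)).insert hc (by simp [hc.compl_compl, ha l hl]))
    (fun l => by by_cases hl : l = i <;> simp_all)
  have hui : c (u i) ≠ w i ∧ u i ≠ v i := by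
    simpa [hLi, hc.injective.eq_iff] using huL i
  have hul (l) (hl : l ≠ i) : u l ≠ a l ∧ c (u l) ≠ w l ∧ c (u l) ≠ v l := by
    simpa [hLl l hl, hc.injective.eq_iff] using huL l
  obtain ⟨j, hj⟩ := hV v hv u hu fun h => hui.2 (congrFun h i).symm
  obtain rfl : j = i := by
    by_contra hji
    exact (hul j hji).2.2 (hc.eq_compl_comm.1 hj).symm
  refine ⟨u, hu, not_dichotomous_iff.2 fun l hl => ?_, hj, fun l hl => (hul l hl).1⟩
  have hcl : c (u l) = w l := (hc.eq_compl_comm.1 hl).symm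
  obtain rfl | hlj := eq_or_ne l j
  · exact hui.1 hcl
  · exact (hul l hlj).2.1 hcl

theorem Equivalent.isCoveredBy (hVW : Equivalent c V W) (hw : w ∈ W) : IsCoveredBy c w V :=
  (Set.subset_biUnion_of_mem hw).trans_eq (Eq.symm hVW)

theorem Equivalent.eq_of_subset (hc : IsComplementation c) (hV : PolyboxCode c V)
    (hVW : Equivalent c V W) (hWV : W ⊆ V) : W = V := by
  refine hWV.antisymm fun v hv => ?_
  have hvW : IsCoveredBy c v W := Equivalent.isCoveredBy (Eq.symm hVW) hv
  obtain ⟨w, hw, hvw⟩ := hvW.exists_mem_not_dichotomous hc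
  rwa [hV.eq_of_not_dichotomous hv (hWV hw) hvw]

theorem rigid_of_subsingleton [Subsingleton (Fin d → S)] (hc : IsComplementation c)
    (hV : PolyboxCode c V) : Rigid c V := by
  refine fun W _ hVW => hVW.eq_of_subset hc hV fun w hw => ?_
  obtain ⟨v, hv, -⟩ := (hVW.isCoveredBy hw).exists_mem_not_dichotomous hc
  rwa [Subsingleton.elim w v]

theorem PolyboxCode.encard_le_add_one_of_no_common_letter (hV : PolyboxCode c V)
    (hletter : ∀ u ∈ V, ∀ v ∈ V, ∀ i, u i = v i → u = v) : V.encard ≤ d + 1 := by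
  obtain rfl | ⟨v, hv⟩ := V.eq_empty_or_nonempty
  · simp
  choose f hf using fun u : ↥(V \ {v}) => hV v hv u u.2.1 (Ne.symm u.2.2)
  have hinj : Function.Injective f := fun x y hxy =>
    Subtype.ext (hletter x x.2.1 y y.2.1 (f x) (by rw [hf x, hxy, hf y]))
  calc V.encard ≤ (insert v (V \ {v})).encard := Set.encard_le_encard (by simp)
    _ ≤ (V \ {v}).encard + 1 := Set.encard_insert_le _ _
    _ ≤ ENat.card (Fin d) + 1 := by gcongr; exact ENat.card_le_card_of_injective hinj
    _ = d + 1 := by simp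

section Cons

theorem vecCons_injective (s : S) :
    Function.Injective (Matrix.vecCons s : (Fin d → S) → Fin (d + 1) → S) :=
  Fin.cons_right_injective (α := fun _ => S) s

theorem dichotomous_cons_iff (hc : IsComplementation c) (s : S) :
    Dichotomous c (Matrix.vecCons s u) (Matrix.vecCons s v) ↔ Dichotomous c u v := by
  simp [Dichotomous, Fin.exists_fin_succ, (hc.compl_ne s).symm]

theorem twinPair_cons_iff (hc : IsComplementation c) (s : S) :
    TwinPair c (Matrix.vecCons s u) (Matrix.vecCons s v) ↔ TwinPair c u v := by
  simp [TwinPair, Fin.exists_fin_succ, Fin.forall_fin_succ, (hc.compl_ne s).symm]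

theorem mem_realize_cons_iff (s : S) (B : Fin (d + 1) → Set S) :
    B ∈ realize c (Matrix.vecCons s v) ↔ B 0 ∈ Eltr c s ∧ Fin.tail B ∈ realize c v := by
  simp [realize, Fin.forall_fin_succ, Fin.tail]

theorem PolyboxCode.image_cons (hc : IsComplementation c) (s : S) (hV : PolyboxCode c V) :
    PolyboxCode c (Matrix.vecCons s '' V) := by
  rintro _ ⟨u, hu, rfl⟩ _ ⟨v, hv, rfl⟩ huv
  exact (dichotomous_cons_iff hc s).2 (hV u hu v hv (ne_of_apply_ne _ huv))

theorem IsTwinFreeCode.image_cons (hc : IsComplementation c) (s : S) (hV : IsTwinFreeCode c V) :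
    IsTwinFreeCode c (Matrix.vecCons s '' V) where
  polyboxCode := hV.polyboxCode.image_cons hc s
  not_twinPair := by
    rintro _ ⟨u, hu, rfl⟩ _ ⟨v, hv, rfl⟩
    rw [twinPair_cons_iff hc]
    exact hV.not_twinPair u hu v hv

theorem Equivalent.image_cons (s : S) (hVW : Equivalent c V W) :
    Equivalent c (Matrix.vecCons s '' V) (Matrix.vecCons s '' W) := by
  have hmem (U : Set (Fin d → S)) (B : Fin (d + 1) → Set S) :
      B ∈ ⋃ v ∈ Matrix.vecCons s '' U, realize c v ↔
        B 0 ∈ Eltr c s ∧ Fin.tail B ∈ ⋃ v ∈ U, realize c v := by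
    simp only [Set.biUnion_image, Set.mem_iUnion₂, mem_realize_cons_iff]
    grind
  ext B
  rw [hmem, hmem, hVW]

theorem rigid_of_rigid_image_cons (hc : IsComplementation c) (s : S)
    (hV : Rigid c (Matrix.vecCons s '' V)) : Rigid c V :=
  fun _ hW hVW => (vecCons_injective s).image_injective
    (hV _ (hW.image_cons hc s) (hVW.image_cons s))

end Cons

end AnyDimension

section DimensionThree

variable {S : Type*} {c : S → S} {V W : Set (Fin 3 → S)} {u v w x y z : Fin 3 → S}
  {i j k : Fin 3}

namespace IsTwinFreeCode

theorem eq_of_apply_eq_of_apply_eq (hV : IsTwinFreeCode c V) (hc : IsComplementation c)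
    (hijk : IsFrame i j k) (hu : u ∈ V) (hv : v ∈ V) (hi : u i = v i) (hj : u j = v j) : u = v :=
  hV.eq_of_forall_ne hc hu hv (i := k)
    (hijk.forall_iff.2 ⟨fun _ => hi, fun _ => hj, fun hk => (hk rfl).elim⟩)

/-- Two of the three pairs are dichotomous at the same coordinate, so two of the three words agree
there as well as at `i`. -/
theorem eq_of_common_letter (hV : IsTwinFreeCode c V) (hc : IsComplementation c) (hx : x ∈ V)
    (hy : y ∈ V) (hz : z ∈ V) (hxy : x i = y i) (hxz : x i = z i) (hne_xy : x ≠ y)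
    (hne_xz : x ≠ z) : y = z := by
  obtain ⟨j, hji⟩ := exists_ne i
  obtain ⟨k, hijk⟩ := exists_isFrame hji.symm
  have hikj : IsFrame i k j := hijk.swap.rotate
  have hyz : y i = z i := hxy.symm.trans hxz
  have dichotomous_at {a b : Fin 3 → S} (ha : a ∈ V) (hb : b ∈ V) (hab : a i = b i) (hne : a ≠ b) :
      b j = c (a j) ∨ b k = c (a k) :=
    (hijk.exists_iff.1 (hV.polyboxCode a ha b hb hne)).resolve_left
      fun h => hc.compl_ne (a i) (h.symm.trans hab.symm)
  have eq_of_j {a b} (ha : a ∈ V) (hb : b ∈ V) := hV.eq_of_apply_eq_of_apply_eq hc hijk ha hb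
  have eq_of_k {a b} (ha : a ∈ V) (hb : b ∈ V) := hV.eq_of_apply_eq_of_apply_eq hc hikj ha hb
  by_contra hne_yz
  have compl_compl := hc.compl_compl
  rcases dichotomous_at hx hy hxy hne_xy with hxy' | hxy' <;>
  rcases dichotomous_at hx hz hxz hne_xz with hxz' | hxz' <;>
  rcases dichotomous_at hy hz hyz hne_yz with hyz' | hyz' <;>
  grind

theorem encard_apply_eq_le_two (hV : IsTwinFreeCode c V) (hc : IsComplementation c) (i : Fin 3)
    (s : S) : {v ∈ V | v i = s}.encard ≤ 2 := by
  obtain hempty | ⟨x, hx, hxi⟩ := {v ∈ V | v i = s}.eq_empty_or_nonempty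
  · simp [hempty]
  have hsub : ({v ∈ V | v i = s} \ {x}).Subsingleton := fun y hy z hz =>
    hV.eq_of_common_letter hc hx hy.1.1 hz.1.1 (hxi.trans hy.1.2.symm) (hxi.trans hz.1.2.symm)
      (Ne.symm hy.2) (Ne.symm hz.2)
  calc {v ∈ V | v i = s}.encard ≤ (insert x ({v ∈ V | v i = s} \ {x})).encard :=
        Set.encard_le_encard (by simp)
    _ ≤ ({v ∈ V | v i = s} \ {x}).encard + 1 := Set.encard_insert_le _ _
    _ ≤ 1 + 1 := by gcongr; exact Set.encard_le_one_iff_subsingleton.2 hsub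
    _ = 2 := one_add_one_eq_two

theorem apply_eq_of_apply_eq_compl (hV : IsTwinFreeCode c V) (hc : IsComplementation c)
    (hijk : IsFrame i j k) (hu : u ∈ V) (hv : v ∈ V) (hi : u i = v i) (hj : v j = c (u j))
    (hx : x ∈ V) (hxj : x j = v j) (hxv : x ≠ v) (hxi : x i ≠ c (u i))
    {p : Fin 3 → S} (hp : p ∈ V) (hpi : p i = c (u i)) (hpj : p j ≠ u j) : p k = v k := by
  have huv : u ≠ v := by rintro rfl; exact hc.compl_ne _ hj.symm
  have hux : u ≠ x := by rintro rfl; exact hc.compl_ne _ (hj.symm.trans hxj.symm)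
  have hxi' : x i ≠ u i := fun h => hxv (hV.eq_of_common_letter hc hu hv hx hi h.symm huv hux).symm
  have hxk : x k = c (v k) := by
    rcases hijk.exists_iff.1 (hV.polyboxCode v hv x hx hxv.symm) with h | h | h
    · exact (hxi (h.trans (congrArg c hi.symm))).elim
    · exact (hc.compl_ne _ (h.symm.trans hxj)).elim
    · exact h
  have hxp : x ≠ p := by rintro rfl; exact hxi hpi
  rcases hijk.exists_iff.1 (hV.polyboxCode x hx p hp hxp) with h | h | h
  · exact (hxi' (hc.injective (h.symm.trans hpi))).elim
  · exact (hpj (by rw [h, hxj, hj, hc.compl_compl])).elim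
  · rw [h, hxk, hc.compl_compl]

theorem exists_mem_apply_ne_apply_ne_ne (hV : IsTwinFreeCode c V) (hc : IsComplementation c)
    (hcard : 5 < V.encard) (i j : Fin 3) (s t : S) (u : Fin 3 → S) :
    ∃ x ∈ V, x i ≠ s ∧ x j ≠ t ∧ x ≠ u := by
  have hle : ({v ∈ V | v i = s} ∪ {v ∈ V | v j = t} ∪ {u}).encard ≤ 5 :=
    calc _ ≤ {v ∈ V | v i = s}.encard + {v ∈ V | v j = t}.encard + ({u} : Set _).encard :=
          (Set.encard_union_le _ _).trans (add_le_add_left (Set.encard_union_le _ _) _)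
      _ ≤ 2 + 2 + 1 := by
        gcongr
        · exact hV.encard_apply_eq_le_two hc i s
        · exact hV.encard_apply_eq_le_two hc j t
        · exact (Set.encard_singleton u).le
      _ = 5 := by norm_num
  obtain ⟨x, hx, hxA⟩ := Set.not_subset.1
    fun hsub => hcard.not_ge ((Set.encard_le_encard hsub).trans hle)
  simp only [Set.mem_union, Set.mem_ofPred_eq, Set.mem_singleton_iff] at hxA
  tauto

theorem encard_le_five_of_common_letter (hV : IsTwinFreeCode c V) (hc : IsComplementation c)
    (hijk : IsFrame i j k) (hu : u ∈ V) (hv : v ∈ V) (hi : u i = v i) (hj : v j = c (u j)) :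
    V.encard ≤ 5 := by
  have huj : u j = c (v j) := hc.eq_compl_comm.1 hj
  have huv : u ≠ v := by rintro rfl; exact hc.compl_ne _ hj.symm
  have hk : u k ≠ v k := fun h => huv
    (hV.eq_of_apply_eq_of_apply_eq hc hijk.rotate.rotate hu hv h hi)
  have letter_cases {x} (hx : x ∈ V) : x i = c (u i) ∨ x j = u j ∨ x j = v j := by
    obtain rfl | hxu := eq_or_ne x u
    · exact .inr (.inl rfl)
    obtain rfl | hxv := eq_or_ne x v
    · exact .inr (.inr rfl)
    have hdu := hijk.exists_iff.1 (hV.polyboxCode u hu x hx hxu.symm)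
    have hdv := hijk.exists_iff.1 (hV.polyboxCode v hv x hx hxv.symm)
    have hk' : c (u k) ≠ c (v k) := hc.injective.ne hk
    grind
  by_contra! hcard
  obtain ⟨p, hp, hpu, hpv, -⟩ :=
    hV.exists_mem_apply_ne_apply_ne_ne hc hcard j j (u j) (v j) u
  obtain ⟨x, hx, hxi, hxu, hxv⟩ :=
    hV.exists_mem_apply_ne_apply_ne_ne hc hcard i j (c (u i)) (u j) v
  obtain ⟨y, hy, hyi, hyv, hyu⟩ :=
    hV.exists_mem_apply_ne_apply_ne_ne hc hcard i j (c (u i)) (v j) u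
  have hpi : p i = c (u i) := by grind
  have hxj : x j = v j := by grind
  have hyj : y j = u j := by grind
  have hpk_v : p k = v k :=
    hV.apply_eq_of_apply_eq_compl hc hijk hu hv hi hj hx hxj hxv hxi hp hpi hpu
  have hpk_u : p k = u k :=
    hV.apply_eq_of_apply_eq_compl hc hijk hv hu hi.symm huj hy hyj hyu (hi ▸ hyi) hp (hi ▸ hpi) hpv
  exact hk (hpk_u.symm.trans hpk_v)

theorem encard_le_five (hV : IsTwinFreeCode c V) (hc : IsComplementation c) : V.encard ≤ 5 := by
  by_cases hletter : ∀ u ∈ V, ∀ v ∈ V, ∀ i, u i = v i → u = v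
  · exact (hV.polyboxCode.encard_le_add_one_of_no_common_letter hletter).trans (by norm_num)
  push Not at hletter
  obtain ⟨u, hu, v, hv, i, hi, huv⟩ := hletter
  obtain ⟨j, hj⟩ := hV.polyboxCode u hu v hv huv
  have hij : i ≠ j := by
    rintro rfl
    exact hc.compl_ne _ (hj.symm.trans hi.symm)
  obtain ⟨k, hijk⟩ := exists_isFrame hij
  exact hV.encard_le_five_of_common_letter hc hijk hu hv hi hj

end IsTwinFreeCode

/-- Some word of `V` with the letter `c (v i)` at `i` avoids both `x j` and `y k`, and at most two
words have that letter. -/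
theorem IsCoveredBy.eq_of_apply_eq_compl (hc : IsComplementation c) (hV : IsTwinFreeCode c V)
    (hw : IsCoveredBy c w V) (hijk : IsFrame i j k) (hv : v ∈ V) (hwv : ¬ Dichotomous c w v)
    (hvi : v i ≠ w i) (hx : x ∈ V) (hy : y ∈ V) (hxi : x i = c (v i)) (hyi : y i = c (v i))
    (hxj : x j ≠ v j ∧ x j ≠ w j) (hyk : y k ≠ v k ∧ y k ≠ w k) : x = y := by
  have ha : ∀ l, l ≠ i →
      Function.update y j (x j) l ≠ v l ∧ Function.update y j (x j) l ≠ w l :=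
    hijk.forall_iff.2 ⟨fun h => (h rfl).elim, fun _ => by simpa using hxj,
      fun _ => by simpa [hijk.ne₂₃.symm] using hyk⟩
  obtain ⟨z, hz, -, hzi, hza⟩ := hw.exists_mem_apply_eq_compl hc hV.polyboxCode hv hwv hvi ha
  have hzx : z ≠ x := by
    rintro rfl
    simpa using hza j hijk.ne₁₂.symm
  have hzy : z ≠ y := by
    rintro rfl
    simpa [hijk.ne₂₃.symm] using hza k hijk.ne₁₃.symm
  exact hV.eq_of_common_letter hc hz hx hy (hzi.trans hxi.symm) (hzi.trans hyi.symm) hzx hzy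

theorem IsCoveredBy.exists_mem_flip (hc : IsComplementation c) (hV : IsTwinFreeCode c V)
    (hw : IsCoveredBy c w V) (hv : v ∈ V) (hwv : ¬ Dichotomous c w v) (hvi : v i ≠ w i) :
    ∃ u ∈ V, ¬ Dichotomous c w u ∧ u i = c (v i) ∧ ∃ l ≠ i, v l ≠ w l ∧ u l = w l := by
  by_contra! hnone
  have ne_w {u} (hu : u ∈ V) (hwu : ¬ Dichotomous c w u) (hui : u i = c (v i)) {l} (hl : l ≠ i)
      (hul : u l ≠ v l) : u l ≠ v l ∧ u l ≠ w l :=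
    ⟨hul, fun h => hnone u hu hwu hui l hl (fun h' => hul (h.trans h'.symm)) h⟩
  have exists_ne_v {u} (hu : u ∈ V) (hui : u i = c (v i)) : ∃ l ≠ i, u l ≠ v l :=
    hV.exists_ne_apply_ne hc hu hv (by rintro rfl; exact hc.compl_ne _ hui.symm) i
  have hcv (l) : c (v l) ≠ v l ∧ c (v l) ≠ w l :=
    ⟨hc.compl_ne _, fun h => hwv ⟨l, hc.eq_compl_comm.1 h.symm⟩⟩
  obtain ⟨x, hx, hwx, hxi, -⟩ := hw.exists_mem_apply_eq_compl hc hV.polyboxCode hv hwv hvi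
    fun l _ => hcv l
  obtain ⟨j, hji, hxj⟩ := exists_ne_v hx hxi
  obtain ⟨k, hijk⟩ := exists_isFrame hji.symm
  have hxj := ne_w hx hwx hxi hji hxj
  obtain ⟨y, hy, hwy, hyi, hya⟩ := hw.exists_mem_apply_eq_compl hc hV.polyboxCode hv hwv hvi
    (a := Function.update (fun l => c (v l)) j (x j))
    fun l _ => by
      obtain rfl | hl := eq_or_ne l j
      · simpa using hxj
      · simpa [hl] using hcv l
  have hxy : x ≠ y := by
    rintro rfl
    simpa using hya j hji
  have hyk : y k = v k := by
    by_contra hyk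
    exact hxy (hw.eq_of_apply_eq_compl hc hV hijk hv hwv hvi hx hy hxi hyi hxj
      (ne_w hy hwy hyi hijk.ne₁₃.symm hyk))
  have hyj : y j ≠ v j := fun hyj => by
    obtain ⟨l, hli, hl⟩ := exists_ne_v hy hyi
    rcases hijk.eq_or_eq_or_eq l with rfl | rfl | rfl <;> contradiction
  have hxk : x k = v k := by
    by_contra hxk
    exact hxy (hw.eq_of_apply_eq_compl hc hV hijk hv hwv hvi hy hx hyi hxi
      (ne_w hy hwy hyi hji hyj) (ne_w hx hwx hxi hijk.ne₁₃.symm hxk)).symm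
  exact hxy (hV.eq_of_apply_eq_of_apply_eq hc hijk.rotate.rotate hx hy (hxk.trans hyk.symm)
    (hxi.trans hyi.symm))

/-- Three words of `V` of the form `(w i, b, e)`, `(a, w j, e')`, `(a', b', w k)` with respect to
the coordinates `i`, `j`, `k`, all of whose boxes meet the box of `w`; such words exist whenever `V`
covers the box of `w` without containing `w`. -/
structure IsCyclicTriple (c : S → S) (V : Set (Fin 3 → S)) (w : Fin 3 → S) (i j k : Fin 3)
    (x y z : Fin 3 → S) : Prop where
  isFrame : IsFrame i j k
  mem₁ : x ∈ V
  mem₂ : y ∈ V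
  mem₃ : z ∈ V
  not_dichotomous₁ : ¬ Dichotomous c w x
  not_dichotomous₂ : ¬ Dichotomous c w y
  not_dichotomous₃ : ¬ Dichotomous c w z
  apply_eq₁ : x i = w i
  apply_eq₂ : y j = w j
  apply_eq₃ : z k = w k
  compl₁₂ : y k = c (x k)
  compl₁₃ : z j = c (x j)
  compl₂₃ : z i = c (y i)

theorem IsCoveredBy.exists_isCyclicTriple (hc : IsComplementation c) (hV : IsTwinFreeCode c V)
    (hw : IsCoveredBy c w V) (hwV : w ∉ V) : ∃ i j k x y z, IsCyclicTriple c V w i j k x y z := by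
  have exists_ne {v} (hv : v ∈ V) : ∃ i, v i ≠ w i :=
    Function.ne_iff.1 (ne_of_mem_of_not_mem hv hwV)
  obtain ⟨v, hv, hwv⟩ := hw.exists_mem_not_dichotomous hc
  obtain ⟨m, hm⟩ := exists_ne hv
  obtain ⟨z, hz, hwz, -, k, -, -, hzk⟩ := hw.exists_mem_flip hc hV hv hwv hm
  obtain ⟨i, hzi⟩ := exists_ne hz
  have hik : i ≠ k := by rintro rfl; exact hzi hzk
  obtain ⟨y, hy, hwy, hyi, j, hji, hzj, hyj⟩ := hw.exists_mem_flip hc hV hz hwz hzi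
  have hjk : j ≠ k := by rintro rfl; exact hzj hzk
  have hijk : IsFrame i j k := ⟨hji.symm, hik, hjk⟩
  have hyi' : y i ≠ w i := fun h => hwz ⟨i, hc.eq_compl_comm.1 (h.symm.trans hyi)⟩
  have hyk : y k ≠ w k := by
    obtain ⟨-, -, -, -, l, hli, hyl, -⟩ := hw.exists_mem_flip hc hV hy hwy hyi'
    rcases hijk.eq_or_eq_or_eq l with rfl | rfl | rfl <;> trivial
  obtain ⟨x, hx, hwx, hxk, l, hlk, hyl, hxl⟩ := hw.exists_mem_flip hc hV hy hwy hyk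
  obtain rfl : l = i := by
    rcases hijk.eq_or_eq_or_eq l with rfl | rfl | rfl <;> trivial
  have hxz : x ≠ z := by rintro rfl; exact hzi hxl
  have hzj' : z j = c (x j) := by
    rcases hijk.exists_iff.1 (hV.polyboxCode x hx z hz hxz) with h | h | h
    · exact (hwz ⟨_, h.trans (congrArg c hxl)⟩).elim
    · exact h
    · exact (hwx ⟨k, hc.eq_compl_comm.1 (hzk ▸ h)⟩).elim
  exact ⟨l, j, k, x, y, z, hijk, hx, hy, hz, hwx, hwy, hwz, hxl, hyj, hzk,
    hc.eq_compl_comm.1 hxk, hzj', hc.eq_compl_comm.1 hyi⟩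

namespace IsCyclicTriple

theorem rotate (hc : IsComplementation c) (h : IsCyclicTriple c V w i j k x y z) :
    IsCyclicTriple c V w j k i y z x :=
  ⟨h.isFrame.rotate, h.mem₂, h.mem₃, h.mem₁, h.not_dichotomous₂, h.not_dichotomous₃,
    h.not_dichotomous₁, h.apply_eq₂, h.apply_eq₃, h.apply_eq₁, h.compl₂₃,
    hc.eq_compl_comm.1 h.compl₁₂, hc.eq_compl_comm.1 h.compl₁₃⟩

theorem swap (hc : IsComplementation c) (h : IsCyclicTriple c V w i j k x y z) :
    IsCyclicTriple c V w j i k y x z :=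
  ⟨h.isFrame.swap, h.mem₂, h.mem₁, h.mem₃, h.not_dichotomous₂, h.not_dichotomous₁,
    h.not_dichotomous₃, h.apply_eq₂, h.apply_eq₁, h.apply_eq₃,
    hc.eq_compl_comm.1 h.compl₁₂, h.compl₂₃, h.compl₁₃⟩

theorem exists_mem_apply_eq (h : IsCyclicTriple c V w i j k x y z) (l : Fin 3) :
    ∃ v ∈ V, v l = w l := by
  rcases h.isFrame.eq_or_eq_or_eq l with rfl | rfl | rfl
  exacts [⟨x, h.mem₁, h.apply_eq₁⟩, ⟨y, h.mem₂, h.apply_eq₂⟩, ⟨z, h.mem₃, h.apply_eq₃⟩]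

/-- The part of the box of `w` given by the letters `y i`, `z j`, `x k` meets none of the boxes of
`x`, `y`, `z`. -/
theorem exists_mem_complementary (h : IsCyclicTriple c V w i j k x y z) (hc : IsComplementation c)
    (hV : PolyboxCode c V) (hw : IsCoveredBy c w V) :
    ∃ u ∈ V, u i = y i ∧ u j = z j ∧ u k = x k := by
  have hijk := h.isFrame
  have compl_compl := hc.compl_compl
  have hwx := not_dichotomous_iff.1 h.not_dichotomous₁
  have hwy := not_dichotomous_iff.1 h.not_dichotomous₂
  have hwz := not_dichotomous_iff.1 h.not_dichotomous₃
  obtain ⟨t, hti, htj, htk⟩ : ∃ t : Fin 3 → S, t i = y i ∧ t j = z j ∧ t k = x k :=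
    ⟨Function.update (Function.update x j (z j)) i (y i), by
      simp [hijk.ne₁₂.symm, hijk.ne₁₃.symm, hijk.ne₂₃.symm]⟩
  have hwt : ∀ l, t l ≠ c (w l) :=
    hijk.forall_iff.2 ⟨hti ▸ hwy i, htj ▸ hwz j, htk ▸ hwx k⟩
  obtain ⟨u, hu, huL⟩ := hw.exists_mem_forall_compl_notMem hc (L := fun l => {w l, t l})
    (fun l => isComplFree_pair hc (hwt l)) (fun l => .inl rfl)
  simp only [Set.mem_insert_iff, Set.mem_singleton_iff, not_or, hijk.forall_iff, hti, htj, htk]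
    at huL
  have hxu := hijk.exists_iff.1 (hV x h.mem₁ u hu (by grind [h.compl₁₃]))
  have hyu := hijk.exists_iff.1 (hV y h.mem₂ u hu (by grind [h.compl₁₂]))
  have hzu := hijk.exists_iff.1 (hV z h.mem₃ u hu (by grind [h.compl₂₃]))
  grind [h.apply_eq₁, h.apply_eq₂, h.apply_eq₃, h.compl₁₂, h.compl₁₃, h.compl₂₃]

theorem apply_ne_compl (h : IsCyclicTriple c V w i j k x y z) (hc : IsComplementation c)
    (hV : IsTwinFreeCode c V) (hw : IsCoveredBy c w V) (hv : v ∈ V) : v i ≠ c (w i) := by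
  intro hvi
  have hijk := h.isFrame
  have hwx := not_dichotomous_iff.1 h.not_dichotomous₁
  have hwy := not_dichotomous_iff.1 h.not_dichotomous₂
  have hwz := not_dichotomous_iff.1 h.not_dichotomous₃
  obtain ⟨u, hu, hui, huj, huk⟩ := h.exists_mem_complementary hc hV.polyboxCode hw
  obtain ⟨u', hu', huj', hui', huk'⟩ := (h.swap hc).exists_mem_complementary hc hV.polyboxCode hw
  have compl_compl := hc.compl_compl
  have hyi : y i ≠ w i := by grind [h.compl₂₃]
  have hzi : z i ≠ w i := by grind [h.compl₂₃]
  have dichotomous_off_i {a} (ha : a ∈ V) (hai : a i ≠ w i) (hai' : a i ≠ c (w i)) :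
      v j = c (a j) ∨ v k = c (a k) := by
    have hva := hijk.exists_iff.1 (hV.polyboxCode a ha v hv (by grind))
    grind
  have hvy := dichotomous_off_i h.mem₂ hyi (hwy i)
  have hvz := dichotomous_off_i h.mem₃ hzi (hwz i)
  have hvu := dichotomous_off_i hu (hui ▸ hyi) (hui ▸ hwy i)
  have hvu' := dichotomous_off_i hu' (hui' ▸ hzi) (hui' ▸ hwz i)
  have hvx : v j = x j ∧ v k = x k := by
    grind [h.apply_eq₂, h.apply_eq₃, h.compl₁₂, h.compl₁₃]
  have hvx : v = x := hV.eq_of_apply_eq_of_apply_eq hc hijk.rotate hv h.mem₁ hvx.1 hvx.2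
  exact hwx i (hvx ▸ hvi)

theorem not_dichotomous (h : IsCyclicTriple c V w i j k x y z) (hc : IsComplementation c)
    (hV : IsTwinFreeCode c V) (hw : IsCoveredBy c w V) (hv : v ∈ V) : ¬ Dichotomous c w v :=
  not_dichotomous_iff.2 (h.isFrame.forall_iff.2 ⟨h.apply_ne_compl hc hV hw hv,
    (h.rotate hc).apply_ne_compl hc hV hw hv,
    ((h.rotate hc).rotate hc).apply_ne_compl hc hV hw hv⟩)

end IsCyclicTriple

theorem IsTwinFreeCode.subset_of_equivalent (hV : IsTwinFreeCode c V) (hc : IsComplementation c)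
    (hW : PolyboxCode c W) (hVW : Equivalent c V W) : W ⊆ V := by
  intro w hw
  by_contra hwV
  obtain ⟨i, j, k, x, y, z, h⟩ := (hVW.isCoveredBy hw).exists_isCyclicTriple hc hV hwV
  have hW_eq {w'} (hw' : w' ∈ W) : w' = w := by
    by_contra hne
    obtain ⟨l, hl⟩ := hW w' hw' w hw hne
    have hw'_notMem : w' ∉ V := fun hw'V =>
      h.not_dichotomous hc hV (hVW.isCoveredBy hw) hw'V ⟨l, hc.eq_compl_comm.1 hl⟩
    obtain ⟨_, _, _, _, _, _, h'⟩ :=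
      (hVW.isCoveredBy hw').exists_isCyclicTriple hc hV hw'_notMem
    obtain ⟨v, hv, hvl⟩ := h.exists_mem_apply_eq l
    exact h'.not_dichotomous hc hV (hVW.isCoveredBy hw') hv ⟨l, hvl.trans hl⟩
  have hW_singleton : W = {w} := Set.eq_singleton_iff_unique_mem.2 ⟨hw, fun _ => hW_eq⟩
  have hx : IsCoveredBy c x {w} := hW_singleton ▸ Equivalent.isCoveredBy (Eq.symm hVW) h.mem₁
  exact hwV (hx.eq_of_singleton hc ▸ h.mem₁)

theorem IsTwinFreeCode.rigid (hV : IsTwinFreeCode c V) (hc : IsComplementation c) : Rigid c V :=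
  fun _ hW hVW => hVW.eq_of_subset hc hV.polyboxCode (hV.subset_of_equivalent hc hW hVW)

end DimensionThree

theorem rigid_of_dim_le_three_general {S : Type*} (c : S → S)
    (hinv : ∀ s, c (c s) = s) (hne : ∀ s, c s ≠ s) {d : ℕ} (hd : d ≤ 3)
    (V : Set (Fin d → S)) (hV : PolyboxCode c V)
    (hVtf : ∀ u ∈ V, ∀ v ∈ V, ¬ TwinPair c u v) :
    Rigid c V ∧ V.encard ≤ 5 := by
  have hc : IsComplementation c := ⟨hinv, hne⟩
  obtain hS | ⟨⟨s⟩⟩ := isEmpty_or_nonempty S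
  · have : Subsingleton (Fin d → S) := inferInstance
    have hcard : V.encard ≤ 1 := Set.encard_le_one_iff_subsingleton.2 V.subsingleton_of_subsingleton
    exact ⟨rigid_of_subsingleton hc hV, hcard.trans (by norm_num)⟩
  · induction hd using Nat.decreasingInduction with
    | self =>
      have hV' : IsTwinFreeCode c V := ⟨hV, hVtf⟩
      exact ⟨hV'.rigid hc, hV'.encard_le_five hc⟩
    | of_succ d _ ih =>
      have hV' : IsTwinFreeCode c (Matrix.vecCons s '' V) := .image_cons hc s ⟨hV, hVtf⟩
      obtain ⟨hrigid, hcard⟩ := ih _ hV'.polyboxCode hV'.not_twinPair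
      exact ⟨rigid_of_rigid_image_cons hc s hrigid, (vecCons_injective s).encard_image V ▸ hcard⟩

/-- For `d ≤ 3`, every polybox code `V ⊆ S^d` without twin pairs is rigid and
has at most 5 words. -/
theorem rigid_of_dim_le_three {S : Type*} [Fintype S] (c : S → S)
    (hinv : ∀ s, c (c s) = s) (hne : ∀ s, c s ≠ s) {d : ℕ} (hd : d ≤ 3)
    (V : Set (Fin d → S)) (hV : PolyboxCode c V)
    (hVtf : ∀ u ∈ V, ∀ v ∈ V, ¬ TwinPair c u v) :
    Rigid c V ∧ V.ncard ≤ 5 :=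
  (rigid_of_dim_le_three_general c hinv hne hd V hV hVtf).imp_right ENat.toNat_le_of_le_natCast
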